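/- Let S be a set, P a point-separating family of pseudometrics on S, X the uniform space on S induced by P, and Y a uniform space on S coarser than X (the identity map X → Y is uniformly continuous). Assume that for every d ∈ P and z ∈ S the function x ↦ d(x,z) is uniformly continuous on Y. If μ is a uniform measure on X with μ(g) = 0 for every g ∈ U_b(Y), then μ = 0, i.e., μ(f) = 0 for every f ∈ U_b(X). (Equivalently, the natural restriction map from uniform measures on X to uniform measures on Y is injective.) -/

import Mathlib

/-!
Every `f ∈ Ub uX` is a uniform limit of functions that are Lipschitz for a pseudometric `D`, a
finite sum of members of `P`; such `D` inherits from `P` that each `D · z` is uniformly continuous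
for `uY`. Explicitly, if `|f| ≤ B` and `|f x - f y| < ε` whenever `D x y < δ`, then with
`K = 2 * B / δ` the inf-convolution `g x = ⨅ z, (f z + K * D x z)` satisfies `f - ε ≤ g ≤ f`.

The finite minima `min B (min_{z ∈ F} (f z + K * D · z))`, with `F` ranging over finite subsets
of `S`, lie in `Ub uY`, so `μ` kills them. They converge pointwise to `g` within the set of
functions that are bounded by `B` and `K`-Lipschitz for `D`, which is UEB for `uX`. Hence
`μ g = 0`, and `|μ f| = |μ (f - g)| ≤ C * ε` for every `ε > 0`.
-/

open Topology Filter

/-- A pseudometric on a set `S`. -/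
def IsPseudometric {S : Type*} (d : S → S → ℝ) : Prop :=
  (∀ x, d x x = 0) ∧ (∀ x y, d x y = d y x) ∧ ∀ x y z, d x z ≤ d x y + d y z

/-- The coarsest uniformity (as a filter on `S × S`) making each pseudometric in `P`
uniformly continuous: it is generated by the entourages `{(x,y) : d(x,y) < ε}`. -/
def pseudometricUniformity {S : Type*} (P : Set (S → S → ℝ)) : Filter (S × S) :=
  ⨅ d ∈ P, ⨅ ε ∈ Set.Ioi (0 : ℝ), Filter.principal {p : S × S | d p.1 p.2 < ε}

/-- `P` separates the points of `S`. -/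
def SeparatesPoints' {S : Type*} (P : Set (S → S → ℝ)) : Prop :=
  ∀ x y : S, x ≠ y → ∃ d ∈ P, 0 < d x y

/-- The bounded uniformly continuous real-valued functions on `S` for the uniformity `u`. -/
def Ub {S : Type*} (u : UniformSpace S) : Set (S → ℝ) :=
  {f | @UniformContinuous S ℝ u _ f ∧ ∃ C : ℝ, ∀ x, |f x| ≤ C}

/-- A set of functions is UEB for `u` if it is uniformly equicontinuous (w.r.t. `u`) and
uniformly bounded. -/
def IsUEB {S : Type*} (u : UniformSpace S) (H : Set (S → ℝ)) : Prop :=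
  (@UniformEquicontinuous (↥H) ℝ S _ u fun f => (f : S → ℝ)) ∧
  ∃ C : ℝ, ∀ f ∈ H, ∀ x, |f x| ≤ C

/-- A uniform measure on `S` with uniformity `u`: a sup-norm-bounded linear functional on
`Ub u` whose restriction to every UEB set is continuous in the topology of pointwise
convergence (the product topology on `S → ℝ`). -/
def IsUniformMeasure {S : Type*} (u : UniformSpace S) (μ : (S → ℝ) → ℝ) : Prop :=
  (∀ f ∈ Ub u, ∀ g ∈ Ub u, μ (f + g) = μ f + μ g) ∧
  (∀ f ∈ Ub u, ∀ c : ℝ, μ (c • f) = c * μ f) ∧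
  (∃ C : ℝ, ∀ f ∈ Ub u, ∀ B : ℝ, (∀ x, |f x| ≤ B) → |μ f| ≤ C * B) ∧
  (∀ H : Set (S → ℝ), H ⊆ Ub u → IsUEB u H → ContinuousOn μ H)

lemma IsPseudometric.nonneg {S : Type*} {d : S → S → ℝ} (hd : IsPseudometric d) (x y : S) :
    0 ≤ d x y := by
  have h1 := hd.2.2 x y x
  rw [hd.1, hd.2.1 y x] at h1
  linarith

/-- A pseudometric that is uniformly continuous for `uX` and whose distance functions `d · z` are
all uniformly continuous for `uY`. Unlike `P`, the set of these is closed under addition. -/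
def IsAdmissible {S : Type*} (uX uY : UniformSpace S) (d : S → S → ℝ) : Prop :=
  IsPseudometric d ∧ (∀ ε > 0, {p : S × S | d p.1 p.2 < ε} ∈ @uniformity S uX) ∧
    ∀ z : S, @UniformContinuous S ℝ uY _ fun x => d x z

lemma IsAdmissible.zero {S : Type*} (uX uY : UniformSpace S) :
    IsAdmissible uX uY (fun _ _ => 0) := by
  refine ⟨⟨by simp, by simp, by simp⟩, fun ε hε => ?_, fun z => ?_⟩
  · simp [hε]
  · exact @uniformContinuous_const S ℝ uY _ 0

lemma IsAdmissible.add {S : Type*} {uX uY : UniformSpace S} {d e : S → S → ℝ}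
    (hd : IsAdmissible uX uY d) (he : IsAdmissible uX uY e) :
    IsAdmissible uX uY (fun x y => d x y + e x y) := by
  refine ⟨⟨?_, ?_, ?_⟩, fun ε hε => ?_, fun z => ?_⟩
  · intro x; simp [hd.1.1, he.1.1]
  · intro x y; simp [hd.1.2.1 x y, he.1.2.1 x y]
  · intro x y z; linarith [hd.1.2.2 x y z, he.1.2.2 x y z]
  · filter_upwards [hd.2.1 (ε / 2) (half_pos hε), he.2.1 (ε / 2) (half_pos hε)] with p h1 h2
    exact (add_lt_add h1 h2).trans_eq (add_halves ε)
  · exact @UniformContinuous.add ℝ S _ _ _ uY _ _ (hd.2.2 z) (he.2.2 z)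

/-- Each entourage of `pseudometricUniformity P` contains a ball entourage of a single admissible
pseudometric. -/
lemma exists_admissible_of_mem {S : Type*} {P : Set (S → S → ℝ)} {uX uY : UniformSpace S}
    (hP : ∀ d ∈ P, IsAdmissible uX uY d) {V : Set (S × S)} (hV : V ∈ pseudometricUniformity P) :
    ∃ D, IsAdmissible uX uY D ∧ ∃ δ > 0, ∀ x y, D x y < δ → (x, y) ∈ V := by
  -- The sets satisfying the conclusion form a filter, which is finer than each generator.
  let G : Filter (S × S) :=
    { sets := {V | ∃ D, IsAdmissible uX uY D ∧ ∃ δ > 0, ∀ x y, D x y < δ → (x, y) ∈ V}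
      univ_sets := ⟨_, IsAdmissible.zero uX uY, 1, one_pos, fun _ _ _ => trivial⟩
      sets_of_superset := by
        rintro A A' ⟨D, hD, δ, hδ, h⟩ hA
        exact ⟨D, hD, δ, hδ, fun x y hxy => hA (h x y hxy)⟩
      inter_sets := by
        rintro A A' ⟨D, hD, δ, hδ, h⟩ ⟨D', hD', δ', hδ', h'⟩
        refine ⟨_, hD.add hD', min δ δ', lt_min hδ hδ', fun x y hxy => ⟨h x y ?_, h' x y ?_⟩⟩
        · have := hD'.1.nonneg x y
          have := min_le_left δ δ'
          linarith
        · have := hD.1.nonneg x y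
          have := min_le_right δ δ'
          linarith }
  have hG : G ≤ pseudometricUniformity P := by
    refine le_iInf₂ fun d hd => le_iInf₂ fun ε hε => Filter.le_principal_iff.2 ?_
    exact ⟨d, hP d hd, ε, hε, fun x y h => h⟩
  exact hG hV

/-- The functions that are bounded by `B` and `K`-Lipschitz for `D`. -/
def lipBall {S : Type*} (D : S → S → ℝ) (K B : ℝ) : Set (S → ℝ) :=
  {h | (∀ x, |h x| ≤ B) ∧ ∀ x y, h x ≤ h y + K * D x y}

lemma lipBall_modulus {S : Type*} {uX uY : UniformSpace S} {D : S → S → ℝ}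
    (hD : IsAdmissible uX uY D) {K : ℝ} (hK : 0 ≤ K) (B : ℝ) {U : Set (ℝ × ℝ)}
    (hU : U ∈ uniformity ℝ) :
    ∀ᶠ p in @uniformity S uX, ∀ h ∈ lipBall D K B, (h p.1, h p.2) ∈ U := by
  obtain ⟨ε, hε, hεU⟩ := Metric.mem_uniformity_dist.1 hU
  filter_upwards [hD.2.1 (ε / (K + 1)) (by positivity)] with p hp h hh
  apply hεU
  have h1 := hh.2 p.1 p.2
  have h2 := hh.2 p.2 p.1
  rw [hD.1.2.1 p.2 p.1] at h2
  have h0 := hD.1.nonneg p.1 p.2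
  have h3 : D p.1 p.2 * (K + 1) < ε := (lt_div_iff₀ (by positivity)).1 hp
  rw [Real.dist_eq, abs_lt]
  constructor <;> nlinarith

lemma lipBall_subset_Ub {S : Type*} {uX uY : UniformSpace S} {D : S → S → ℝ}
    (hD : IsAdmissible uX uY D) {K : ℝ} (hK : 0 ≤ K) (B : ℝ) : lipBall D K B ⊆ Ub uX :=
  fun h hh => ⟨fun _ hU => (lipBall_modulus hD hK B hU).mono fun _ hp => hp h hh, B, hh.1⟩

lemma lipBall_isUEB {S : Type*} {uX uY : UniformSpace S} {D : S → S → ℝ}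
    (hD : IsAdmissible uX uY D) {K : ℝ} (hK : 0 ≤ K) (B : ℝ) : IsUEB uX (lipBall D K B) :=
  ⟨fun _ hU => (lipBall_modulus hD hK B hU).mono fun _ hp h => hp h.1 h.2, B, fun _ hh => hh.1⟩

/-- The witness is `min B (min_{z ∈ F} (f z + K * D · z))`. -/
lemma exists_finite_min {S : Type*} {uX uY : UniformSpace S} {D : S → S → ℝ}
    (hD : IsAdmissible uX uY D) {K B : ℝ} (hK : 0 ≤ K) {f g : S → ℝ} (hg : g ∈ lipBall D K B)
    (hgf : ∀ x z, g x ≤ f z + K * D x z) (F : Finset S) :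
    ∃ h ∈ lipBall D K B, h ∈ Ub uY ∧ (∀ x, g x ≤ h x) ∧
      ∀ z ∈ F, ∀ x, h x ≤ f z + K * D x z := by
  classical
  induction F using Finset.induction_on with
  | empty =>
    have hB : ∀ x : S, |B| ≤ B := fun x =>
      (abs_of_nonneg ((abs_nonneg _).trans (hg.1 x))).le
    refine ⟨fun _ => B, ⟨hB, fun x y => ?_⟩, ⟨@uniformContinuous_const S ℝ uY _ B, B, hB⟩,
      fun x => (abs_le.1 (hg.1 x)).2, by simp⟩
    have := mul_nonneg hK (hD.1.nonneg x y)
    linarith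
  | insert a F _ ih =>
    obtain ⟨h, hh, hY, hgh, hF⟩ := ih
    have hb : ∀ x, |min (h x) (f a + K * D x a)| ≤ B := fun x => abs_le.2
      ⟨(abs_le.1 (hg.1 x)).1.trans (le_min (hgh x) (hgf x a)),
        (min_le_left _ _).trans (abs_le.1 (hh.1 x)).2⟩
    refine ⟨fun x => min (h x) (f a + K * D x a), ⟨hb, fun x y => ?_⟩, ⟨?_, B, hb⟩,
      fun x => le_min (hgh x) (hgf x a), fun z hz x => ?_⟩
    · rw [← min_add_add_right]
      refine min_le_min (hh.2 x y) ?_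
      nlinarith [hD.1.2.2 x y a]
    · have h1 : @UniformContinuous S ℝ uY _ fun x => f a + K * D x a :=
        (LipschitzWith.uniformContinuous
          (LipschitzWith.of_dist_le_mul (K := K.toNNReal) fun s t => by
            rw [Real.dist_eq, Real.dist_eq, Real.coe_toNNReal _ hK, add_sub_add_left_eq_sub,
              ← mul_sub, abs_mul, abs_of_nonneg hK]) :
          UniformContinuous fun t : ℝ => f a + K * t).comp (hD.2.2 a)
      exact lipschitzWith_min.uniformContinuous.comp
        (@UniformContinuous.prodMk S ℝ ℝ uY _ _ _ _ hY.1 h1)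
    · rcases Finset.mem_insert.1 hz with rfl | hz
      · exact min_le_right _ _
      · exact (min_le_left _ _).trans (hF z hz x)

/-- A uniform measure killing `Ub uY` kills every Lipschitz inf-convolution, the pointwise limit
of its finite minima. -/
lemma measure_infConv_eq_zero {S : Type*} {uX uY : UniformSpace S} {D : S → S → ℝ}
    (hD : IsAdmissible uX uY D) {K B : ℝ} (hK : 0 ≤ K) {f g : S → ℝ} (hg : g ∈ lipBall D K B)
    (hgf : ∀ x z, g x ≤ f z + K * D x z)
    (hlim : ∀ x, ∀ ε > 0, ∃ z, f z + K * D x z < g x + ε)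
    {μ : (S → ℝ) → ℝ} (hμ : IsUniformMeasure uX μ) (hker : ∀ g ∈ Ub uY, μ g = 0) : μ g = 0 := by
  choose h hh hY hgh hF using exists_finite_min hD hK hg hgf
  have hconv : Tendsto h atTop (𝓝 g) := by
    refine tendsto_pi_nhds.2 fun x => Metric.tendsto_nhds.2 fun ε hε => ?_
    obtain ⟨z, hz⟩ := hlim x ε hε
    filter_upwards [eventually_ge_atTop {z}] with F hzF
    have h1 := hF F z (hzF (Finset.mem_singleton_self z)) x
    rw [Real.dist_eq, abs_of_nonneg (sub_nonneg.2 (hgh F x))]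
    linarith
  have hcont := hμ.2.2.2 _ (lipBall_subset_Ub hD hK B) (lipBall_isUEB hD hK B) g hg
  have h1 : Tendsto (fun F => μ (h F)) atTop (𝓝 (μ g)) :=
    hcont.tendsto.comp (tendsto_nhdsWithin_iff.2 ⟨hconv, Eventually.of_forall hh⟩)
  simp only [fun F => hker _ (hY F)] at h1
  exact tendsto_nhds_unique h1 tendsto_const_nhds

/-- The inf-convolution `⨅ z, (f z + K * D x z)` is within `ε` of `f`. -/
lemma exists_infConv_approx {S : Type*} {D : S → S → ℝ} (hD : IsPseudometric D)
    {f : S → ℝ} {B ε δ : ℝ} (hB : ∀ x, |f x| ≤ B) (hB0 : 0 ≤ B) (hε : 0 < ε) (hδ : 0 < δ)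
    (hf : ∀ x y, D x y < δ → |f x - f y| < ε) :
    ∃ K ≥ 0, ∃ g ∈ lipBall D K B, (∀ x z, g x ≤ f z + K * D x z) ∧
      (∀ x, ∀ η > 0, ∃ z, f z + K * D x z < g x + η) ∧ ∀ x, |f x - g x| ≤ ε := by
  have hK : 0 ≤ 2 * B / δ := by positivity
  set K := 2 * B / δ with hKdef
  have hlow : ∀ x z, -B ≤ f z + K * D x z := fun x z => by
    have := (abs_le.1 (hB z)).1
    have := mul_nonneg hK (hD.nonneg x z)
    linarith
  have hle : ∀ x z, ⨅ z, (f z + K * D x z) ≤ f z + K * D x z := fun x z =>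
    ciInf_le ⟨-B, by rintro _ ⟨z, rfl⟩; exact hlow x z⟩ z
  have hself : ∀ x, ⨅ z, (f z + K * D x z) ≤ f x := fun x => by
    simpa [hD.1 x] using hle x x
  refine ⟨K, hK, fun x => ⨅ z, (f z + K * D x z), ⟨fun x => ?_, fun x y => ?_⟩, hle,
    fun x η hη => ?_, fun x => ?_⟩
  · have : Nonempty S := ⟨x⟩
    exact abs_le.2 ⟨le_ciInf (hlow x), (hself x).trans (abs_le.1 (hB x)).2⟩
  · have : Nonempty S := ⟨x⟩
    rw [← sub_le_iff_le_add]
    refine le_ciInf fun z => ?_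
    nlinarith [hle x z, hD.2.2 x y z]
  · have : Nonempty S := ⟨x⟩
    exact exists_lt_of_ciInf_lt (lt_add_of_pos_right _ hη)
  · have : Nonempty S := ⟨x⟩
    rw [abs_of_nonneg (sub_nonneg.2 (hself x)), sub_le_comm]
    refine le_ciInf fun z => ?_
    rcases lt_or_ge (D x z) δ with h | h
    · have := (abs_lt.1 (hf x z h)).2
      have := mul_nonneg hK (hD.nonneg x z)
      linarith
    -- The penalty `K * D x z` is at least `2 * B`, which bounds the oscillation of `f`.
    · have h1 : 2 * B ≤ K * D x z := by
        calc 2 * B = K * δ := by rw [hKdef]; field_simp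
          _ ≤ K * D x z := by gcongr
      linarith [(abs_le.1 (hB x)).2, (abs_le.1 (hB z)).1]

/-- Injectivity of the restriction map: under the standing assumptions, a uniform measure on
`X` that vanishes on `U_b(Y)` vanishes on all of `U_b(X)`. -/
theorem uniform_measure_restriction_injective
    {S : Type*} (P : Set (S → S → ℝ)) (hP : ∀ d ∈ P, IsPseudometric d)
    (hsep : SeparatesPoints' P)
    (uX uY : UniformSpace S)
    (hX : @uniformity S uX = pseudometricUniformity P)
    (hcoarse : @UniformContinuous S S uX uY id)
    (hfun : ∀ d ∈ P, ∀ z : S, @UniformContinuous S ℝ uY _ fun x => d x z)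
    (μ : (S → ℝ) → ℝ) (hμ : IsUniformMeasure uX μ)
    (hker : ∀ g ∈ Ub uY, μ g = 0) :
    ∀ f ∈ Ub uX, μ f = 0 := by
  have hPadm : ∀ d ∈ P, IsAdmissible uX uY d := fun d hd =>
    ⟨hP d hd, fun ε hε => hX ▸ mem_iInf_of_mem d (mem_iInf_of_mem hd
      (mem_iInf_of_mem ε (mem_iInf_of_mem hε (mem_principal_self _)))), hfun d hd⟩
  intro f hf
  obtain ⟨C, hC⟩ := hμ.2.2.1
  obtain ⟨B, hB⟩ := hf.2
  have key : ∀ ε > 0, |μ f| ≤ C * ε := by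
    intro ε hε
    have hV : {p : S × S | |f p.1 - f p.2| < ε} ∈ pseudometricUniformity P := by
      rw [← hX]
      exact hf.1 (Metric.dist_mem_uniformity hε)
    obtain ⟨D, hD, δ, hδ, hDf⟩ := exists_admissible_of_mem hPadm hV
    obtain ⟨K, hK, g, hg, hgf, hlim, hfg⟩ := exists_infConv_approx hD.1
      (fun x => (hB x).trans (le_abs_self B)) (abs_nonneg B) hε hδ hDf
    have hg0 := measure_infConv_eq_zero hD hK hg hgf hlim hμ hker
    have hgU := lipBall_subset_Ub hD hK _ hg
    have hsub : f - g ∈ Ub uX :=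
      ⟨@UniformContinuous.sub ℝ S _ _ _ uX _ _ hf.1 hgU.1, ε, hfg⟩
    have hadd := hμ.1 _ hsub _ hgU
    rw [sub_add_cancel, hg0, add_zero] at hadd
    rw [hadd]
    exact hC _ hsub ε hfg
  have hlim : Tendsto (fun ε : ℝ => C * ε) (𝓝[>] 0) (𝓝 0) := by
    have : Tendsto (fun ε : ℝ => C * ε) (𝓝 0) (𝓝 (C * 0)) := tendsto_id.const_mul C
    rw [mul_zero] at this
    exact this.mono_left nhdsWithin_le_nhds
  exact abs_nonpos_iff.1 (ge_of_tendsto hlim (eventually_mem_nhdsWithin.mono key))
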